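/- arXiv:2603.22076 — 2 statements merged into one kernel-verified Lean document; each statement's English description precedes it below -/
import Mathlib

section
/- Let γ > 2 and μ > 0 be real numbers, and let f : ℝ → ℝ be defined by f(s) = |s|^{γ-2} s ln|s| for s ≠ 0 and f(0) = 0. There exists a constant C_μ > 0 such that for all real a and b, |f(a) − f(b)| ≤ C_μ·(1 + |a|^{γ-2+μ} + |b|^{γ-2+μ})·|a − b|. -/
/-!
The nonlinearity is radial, `f x = φ ‖x‖ • x` with `φ t = t ^ p * log t` and `p = γ - 2`. For
`‖b‖ ≤ ‖a‖`, write
`f a - f b = φ ‖a‖ • (a - b) + (φ ‖a‖ - φ ‖b‖) • b`.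
On `[‖b‖, ‖a‖]` the factor `‖b‖` of the second term is at most `t`, so the mean value inequality
only has to control `t * φ' t = (p * log t + 1) * t ^ p`, which, unlike `φ'`, is bounded near `0`.
Hence no sign distinction and no differentiability at the origin are needed, and the estimate
holds in any normed space.
-/

section RadialMaps

variable {φ ψ : ℝ → ℝ} {A B R : ℝ}

lemma abs_sub_mul_le_of_hasDerivAt_div {r s : ℝ} (hs : 0 < s) (hsr : s ≤ r)
    (hφ : ∀ t ∈ Set.Icc s r, HasDerivAt φ (ψ t / t) t) (hψ : ∀ t ∈ Set.Icc s r, |ψ t| ≤ B) :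
    |φ r - φ s| * s ≤ B * (r - s) := by
  have hderiv : ∀ t ∈ Set.Icc s r, ‖ψ t / t‖ ≤ B / s := fun t ht ↦ by
    rw [Real.norm_eq_abs, abs_div, abs_of_pos (hs.trans_le ht.1)]
    exact div_le_div₀ ((abs_nonneg _).trans (hψ t ht)) (hψ t ht) hs ht.1
  have hmean : |φ r - φ s| ≤ B / s * (r - s) := by
    simpa only [Real.norm_eq_abs, abs_of_nonneg (sub_nonneg.2 hsr)] using
      (convex_Icc s r).norm_image_sub_le_of_norm_hasDerivWithin_le
        (fun t ht ↦ (hφ t ht).hasDerivWithinAt) hderiv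
        (Set.left_mem_Icc.2 hsr) (Set.right_mem_Icc.2 hsr)
  calc |φ r - φ s| * s ≤ B / s * (r - s) * s := by gcongr
    _ = B * (r - s) := by field_simp

lemma norm_smul_norm_sub_le_of_hasDerivAt_div {E : Type*} [SeminormedAddCommGroup E]
    [NormedSpace ℝ E] {a b : E} (ha : ‖a‖ ≤ R) (hb : ‖b‖ ≤ R)
    (hφ' : ∀ t ∈ Set.Ioc 0 R, HasDerivAt φ (ψ t / t) t)
    (hφ : ∀ t ∈ Set.Icc 0 R, |φ t| ≤ A) (hψ : ∀ t ∈ Set.Icc 0 R, |ψ t| ≤ B) :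
    ‖φ ‖a‖ • a - φ ‖b‖ • b‖ ≤ (A + B) * ‖a - b‖ := by
  wlog hba : ‖b‖ ≤ ‖a‖ generalizing a b
  · rw [norm_sub_rev, norm_sub_rev a]
    exact this hb ha (le_of_not_ge hba)
  have hB : 0 ≤ B := (abs_nonneg _).trans (hψ ‖a‖ ⟨norm_nonneg a, ha⟩)
  have hradial : |φ ‖a‖ - φ ‖b‖| * ‖b‖ ≤ B * ‖a - b‖ := by
    rcases (norm_nonneg b).eq_or_lt with hb0 | hb0
    · rw [← hb0, mul_zero]
      positivity
    · calc |φ ‖a‖ - φ ‖b‖| * ‖b‖ ≤ B * (‖a‖ - ‖b‖) :=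
            abs_sub_mul_le_of_hasDerivAt_div hb0 hba
              (fun t ht ↦ hφ' t ⟨hb0.trans_le ht.1, ht.2.trans ha⟩)
              (fun t ht ↦ hψ t ⟨hb0.le.trans ht.1, ht.2.trans ha⟩)
        _ ≤ B * ‖a - b‖ := by gcongr; exact norm_sub_norm_le a b
  calc ‖φ ‖a‖ • a - φ ‖b‖ • b‖ = ‖φ ‖a‖ • (a - b) + (φ ‖a‖ - φ ‖b‖) • b‖ := by
        congr 1; module
    _ ≤ |φ ‖a‖| * ‖a - b‖ + |φ ‖a‖ - φ ‖b‖| * ‖b‖ := by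
        simpa only [norm_smul, Real.norm_eq_abs] using
          norm_add_le (φ ‖a‖ • (a - b)) ((φ ‖a‖ - φ ‖b‖) • b)
    _ ≤ A * ‖a - b‖ + B * ‖a - b‖ := by
        gcongr
        exact hφ _ ⟨norm_nonneg a, ha⟩
    _ = (A + B) * ‖a - b‖ := by ring

end RadialMaps

section PowerLog

variable {p q μ t : ℝ}

lemma hasDerivAt_rpow_mul_log (ht : t ≠ 0) :
    HasDerivAt (fun t ↦ t ^ p * Real.log t) ((p * Real.log t + 1) * t ^ p / t) t := by
  refine ((Real.hasDerivAt_rpow_const (Or.inl ht)).mul (Real.hasDerivAt_log ht)).congr_deriv ?_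
  rw [Real.rpow_sub_one ht]
  ring

lemma abs_log_le_inv_rpow_div_add_rpow_div (ht : 0 ≤ t) (hp : 0 < p) (hμ : 0 < μ) :
    |Real.log t| ≤ t⁻¹ ^ p / p + t ^ μ / μ := by
  have hlog : Real.log t ≤ t ^ μ / μ := Real.log_le_rpow_div ht hμ
  have hlog_inv : -Real.log t ≤ t⁻¹ ^ p / p := by
    simpa only [Real.log_inv] using Real.log_le_rpow_div (inv_nonneg.2 ht) hp
  have : 0 ≤ t ^ μ / μ := by positivity
  have : 0 ≤ t⁻¹ ^ p / p := by positivity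
  exact abs_le'.2 ⟨by linarith, by linarith⟩

lemma rpow_mul_abs_log_le (ht : 0 ≤ t) (hp : 0 < p) (hμ : 0 < μ) :
    t ^ p * |Real.log t| ≤ 1 / p + t ^ (p + μ) / μ := by
  rcases ht.eq_or_lt with rfl | ht
  · rw [Real.log_zero, abs_zero, mul_zero]
    positivity
  have hpow : t ^ p ≠ 0 := (Real.rpow_pos_of_pos ht p).ne'
  calc t ^ p * |Real.log t| ≤ t ^ p * (t⁻¹ ^ p / p + t ^ μ / μ) := by
        gcongr
        exact abs_log_le_inv_rpow_div_add_rpow_div ht.le hp hμ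
    _ = 1 / p + t ^ (p + μ) / μ := by
        rw [Real.inv_rpow ht.le, Real.rpow_add ht]
        field_simp

lemma rpow_le_one_add_rpow (ht : 0 ≤ t) (hp : 0 ≤ p) (hpq : p ≤ q) : t ^ p ≤ 1 + t ^ q := by
  rcases le_total t 1 with h | h
  · linarith [Real.rpow_le_one ht h hp, Real.rpow_nonneg ht q]
  · linarith [Real.rpow_le_rpow_of_exponent_le h hpq]

lemma abs_mul_log_add_one_mul_rpow_le (ht : 0 ≤ t) (hp : 0 < p) (hμ : 0 < μ) :
    |(p * Real.log t + 1) * t ^ p| ≤ p * (1 / p + t ^ (p + μ) / μ) + (1 + t ^ (p + μ)) :=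
  calc |(p * Real.log t + 1) * t ^ p| = |p * Real.log t + 1| * t ^ p := by
        rw [abs_mul, abs_of_nonneg (Real.rpow_nonneg ht p)]
    _ ≤ (p * |Real.log t| + 1) * t ^ p := by
        gcongr
        simpa only [abs_mul, abs_of_pos hp, abs_one] using abs_add_le (p * Real.log t) 1
    _ = p * (t ^ p * |Real.log t|) + t ^ p := by ring
    _ ≤ p * (1 / p + t ^ (p + μ) / μ) + (1 + t ^ (p + μ)) := by
        gcongr
        · exact rpow_mul_abs_log_le ht hp hμ
        · exact rpow_le_one_add_rpow ht hp.le (by linarith)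

lemma max_rpow_le_add {r s : ℝ} (hr : 0 ≤ r) (hs : 0 ≤ s) (hq : 0 ≤ q) :
    max r s ^ q ≤ r ^ q + s ^ q := by
  rw [Real.rpow_max hr hs hq]
  exact max_le_add_of_nonneg (Real.rpow_nonneg hr q) (Real.rpow_nonneg hs q)

end PowerLog

section LogNonlinearity

variable {E : Type*} [SeminormedAddCommGroup E] [NormedSpace ℝ E] {γ μ R : ℝ}

/-- The logarithmic nonlinearity `x ↦ ‖x‖ ^ (γ - 2) log ‖x‖ x` on a normed space; the factor `x`
makes it vanish at `0` whatever the value of the scalar coefficient there. -/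
noncomputable def logNonlinearity (γ : ℝ) (x : E) : E :=
  (‖x‖ ^ (γ - 2) * Real.log ‖x‖) • x

lemma norm_logNonlinearity_sub_le {a b : E} (hγ : 2 < γ) (hμ : 0 < μ) (ha : ‖a‖ ≤ R)
    (hb : ‖b‖ ≤ R) :
    ‖logNonlinearity γ a - logNonlinearity γ b‖ ≤
      ((γ - 1) * (1 / (γ - 2) + R ^ (γ - 2 + μ) / μ) + (1 + R ^ (γ - 2 + μ))) * ‖a - b‖ := by
  have hp : 0 < γ - 2 := sub_pos.2 hγ
  refine (norm_smul_norm_sub_le_of_hasDerivAt_div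
    (A := 1 / (γ - 2) + R ^ (γ - 2 + μ) / μ)
    (B := (γ - 2) * (1 / (γ - 2) + R ^ (γ - 2 + μ) / μ) + (1 + R ^ (γ - 2 + μ))) ha hb
    (fun t ht ↦ hasDerivAt_rpow_mul_log ht.1.ne') (fun t ⟨ht, htR⟩ ↦ ?_)
    (fun t ⟨ht, htR⟩ ↦ ?_)).trans_eq (by ring)
  · calc |t ^ (γ - 2) * Real.log t| = t ^ (γ - 2) * |Real.log t| := by
          rw [abs_mul, abs_of_nonneg (Real.rpow_nonneg ht _)]
      _ ≤ 1 / (γ - 2) + t ^ (γ - 2 + μ) / μ := rpow_mul_abs_log_le ht hp hμ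
      _ ≤ 1 / (γ - 2) + R ^ (γ - 2 + μ) / μ := by gcongr
  · refine (abs_mul_log_add_one_mul_rpow_le ht hp hμ).trans ?_
    gcongr

theorem stmt_7_general (hγ : 2 < γ) (hμ : 0 < μ) :
    ∃ C : ℝ, 0 < C ∧ ∀ a b : E, ‖logNonlinearity γ a - logNonlinearity γ b‖ ≤
      C * (1 + ‖a‖ ^ (γ - 2 + μ) + ‖b‖ ^ (γ - 2 + μ)) * ‖a - b‖ := by
  have : 0 < γ - 2 := sub_pos.2 hγ
  have : 0 < γ - 1 := by linarith
  refine ⟨(γ - 1) * (1 / (γ - 2) + 1 / μ) + 1, by positivity, fun a b ↦ ?_⟩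
  refine (norm_logNonlinearity_sub_le hγ hμ (le_max_left ‖a‖ ‖b‖) (le_max_right ‖a‖ ‖b‖)).trans ?_
  gcongr
  set S := ‖a‖ ^ (γ - 2 + μ) + ‖b‖ ^ (γ - 2 + μ)
  have hS : 0 ≤ S := by positivity
  calc (γ - 1) * (1 / (γ - 2) + max ‖a‖ ‖b‖ ^ (γ - 2 + μ) / μ) + (1 + max ‖a‖ ‖b‖ ^ (γ - 2 + μ))
      ≤ (γ - 1) * (1 / (γ - 2) + S / μ) + (1 + S) := by
        gcongr <;> exact max_rpow_le_add (norm_nonneg a) (norm_nonneg b) (by positivity)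
    _ ≤ (γ - 1) * (1 / (γ - 2) * (1 + S) + 1 / μ * (1 + S)) + (1 + S) := by
        gcongr
        · exact le_mul_of_one_le_right (by positivity) (by linarith)
        · rw [one_div_mul_eq_div]
          gcongr
          linarith
    _ = ((γ - 1) * (1 / (γ - 2) + 1 / μ) + 1) *
          (1 + ‖a‖ ^ (γ - 2 + μ) + ‖b‖ ^ (γ - 2 + μ)) := by
        rw [add_assoc 1]
        ring

end LogNonlinearity

/-- For γ > 2, μ > 0 and f(s) = |s|^{γ-2} s ln|s| (f(0)=0), there is C_μ > 0 with
|f(a) − f(b)| ≤ C_μ (1 + |a|^{γ-2+μ} + |b|^{γ-2+μ}) |a − b| for all real a, b. -/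
theorem stmt_7 (γ μ : ℝ) (hγ : 2 < γ) (hμ : 0 < μ) (f : ℝ → ℝ)
    (hf : ∀ s : ℝ, s ≠ 0 → f s = |s| ^ (γ - 2) * s * Real.log |s|) (hf0 : f 0 = 0) :
    ∃ C : ℝ, 0 < C ∧ ∀ a b : ℝ,
      |f a - f b| ≤ C * (1 + |a| ^ (γ - 2 + μ) + |b| ^ (γ - 2 + μ)) * |a - b| := by
  have hfE : f = logNonlinearity γ := funext fun s ↦ by
    rcases eq_or_ne s 0 with rfl | hs
    · rw [hf0, logNonlinearity, smul_zero]
    · rw [hf s hs, logNonlinearity, smul_eq_mul, Real.norm_eq_abs, mul_right_comm]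
  simpa only [hfE, Real.norm_eq_abs] using stmt_7_general (E := ℝ) hγ hμ
end

section
/- Let b > τ > 0 and α ≠ 0 be real numbers and σ ∈ {1, −1}. For ω > 0 define P_ω(s) = (s² + ω²)·(τ s³ + s² + b ω² s + ω²) − α²·(1 + τ s) and the Newton quotient δ(ω) = −P_ω(σ i ω) / P_ω′(σ i ω) (well defined since P_ω′(σ i ω) = −2(b−τ)ω⁴ − α²τ ≠ 0). Then, as ω → ∞, the function ω ↦ δ(ω) + α²/(2(b−τ)ω⁴) + σ i α² τ/(2(b−τ)ω³) is O(ω^{−5}); that is, there exist C > 0 and Ω₀ > 0 such that for all ω ≥ Ω₀, |δ(ω) + α²/(2(b−τ)ω⁴) + σ i α² τ/(2(b−τ)ω³)| ≤ C·ω^{−5}. -/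
/-!
At a root `s` of the wave factor, `s² = -ω²`, one has `P_ω(s) = -α² (1 + τ s)` and
`P_ω'(s) = -(D + k)` with `D = 2 (b - τ) ω⁴` and `k = α² τ`. Since the two leading terms of the
expansion add up to `α² (1 + τ s) / D`, the remainder is
`-α² (1 + τ s) ((D + k)⁻¹ - D⁻¹)`, which is `O(ω) · O(ω⁻⁸) = O(ω⁻⁷)`.
-/

open Asymptotics Bornology Filter Polynomial

section ModalPoly

/-- The characteristic polynomial `P_ω` of the linearized coupled wave–MGT system on the Dirichlet
eigenspace with eigenvalue `ω²`, with coefficients in an arbitrary commutative ring. -/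
noncomputable def modalPoly {R : Type*} [CommRing R] (τ b α ω : R) : R[X] :=
  (X ^ 2 + C ω ^ 2) * (C τ * X ^ 3 + X ^ 2 + C b * C ω ^ 2 * X + C ω ^ 2) -
    C α ^ 2 * (1 + C τ * X)

variable {R : Type*} [CommRing R] {τ b α ω s : R}

lemma eval_modalPoly_of_sq_eq_neg_sq (hs : s ^ 2 = -ω ^ 2) :
    (modalPoly τ b α ω).eval s = -(α ^ 2 * (1 + τ * s)) := by
  simp [modalPoly, hs]

lemma eval_derivative_modalPoly_of_sq_eq_neg_sq (hs : s ^ 2 = -ω ^ 2) :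
    (derivative (modalPoly τ b α ω)).eval s = -(2 * (b - τ) * ω ^ 4 + α ^ 2 * τ) := by
  have hproduct : (derivative (modalPoly τ b α ω)).eval s =
      2 * s * (τ * s ^ 3 + s ^ 2 + b * ω ^ 2 * s + ω ^ 2) +
        (s ^ 2 + ω ^ 2) * (τ * (3 * s ^ 2) + 2 * s + b * ω ^ 2) - α ^ 2 * τ := by
    simp [modalPoly, derivative_pow]
  have hwave : s ^ 2 + ω ^ 2 = 0 := by rw [hs, neg_add_cancel]
  rw [hproduct, hwave]
  linear_combination (2 * τ * s ^ 2 + 2 * s + 2 * (b - τ) * ω ^ 2) * hs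

lemma neg_eval_div_eval_derivative_modalPoly_add_leading {K : Type*} [Field K] {τ b α j ω : K}
    (hj : j ^ 2 = -1) (hω : ω ≠ 0) :
    -(modalPoly τ b α ω).eval (j * ω) / (derivative (modalPoly τ b α ω)).eval (j * ω) +
        α ^ 2 / (2 * (b - τ) * ω ^ 4) + j * (α ^ 2 * τ / (2 * (b - τ) * ω ^ 3)) =
      -(α ^ 2 * (1 + τ * j * ω)) *
        ((2 * (b - τ) * ω ^ 4 + α ^ 2 * τ)⁻¹ - (2 * (b - τ) * ω ^ 4)⁻¹) := by
  have hs : (j * ω) ^ 2 = -ω ^ 2 := by rw [mul_pow, hj, neg_one_mul]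
  have hcube : (2 * (b - τ) * ω ^ 3)⁻¹ = ω * (2 * (b - τ) * ω ^ 4)⁻¹ := by
    simp only [mul_inv]
    field_simp
  rw [eval_modalPoly_of_sq_eq_neg_sq hs, eval_derivative_modalPoly_of_sq_eq_neg_sq hs,
    neg_div_neg_eq, neg_div]
  simp only [div_eq_mul_inv, hcube]
  ring

end ModalPoly

section Asymptotics

variable {T 𝕜 : Type*} [NormedField 𝕜] {l : Filter T} {u : T → 𝕜}

lemma isBigO_const_add_const_mul_of_tendsto_cobounded (hu : Tendsto u l (cobounded 𝕜)) (a c : 𝕜) :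
    (fun t => a + c * u t) =O[l] u :=
  ((isLittleO_const_id_cobounded a).comp_tendsto hu).isBigO.add (isBigO_const_mul_self c u l)

lemma isBigO_inv_add_const_sub_inv_of_tendsto_cobounded (hu : Tendsto u l (cobounded 𝕜)) (k : 𝕜) :
    (fun t => (u t + k)⁻¹ - (u t)⁻¹) =O[l] fun t => (u t)⁻¹ * (u t)⁻¹ := by
  have hequiv : (fun t => u t + k) ~[l] u :=
    IsEquivalent.refl.add_const_of_norm_tendsto_atTop (tendsto_norm_atTop_iff_cobounded.2 hu)
  have hdiff : (fun t => (u t + k)⁻¹ - (u t)⁻¹) =ᶠ[l] fun t => -k * ((u t + k)⁻¹ * (u t)⁻¹) := by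
    filter_upwards [hu.eventually_ne_cobounded 0, hu.eventually_ne_cobounded (-k)] with t h₀ hk
    rw [inv_sub_inv' (mt eq_neg_of_add_eq_zero_left hk) h₀]
    ring
  exact hdiff.trans_isBigO <|
    (hequiv.inv.isBigO.mul (isBigO_refl (fun t => (u t)⁻¹) l)).const_mul_left (-k)

end Asymptotics

lemma exists_forall_norm_le_mul_zpow_of_isBigO {E : Type*} [SeminormedAddCommGroup E] {f : ℝ → E}
    {m n : ℤ} (hmn : m ≤ n) (hf : f =O[atTop] fun x : ℝ => x ^ m) :
    ∃ C x₀ : ℝ, 0 < C ∧ 0 < x₀ ∧ ∀ x : ℝ, x₀ ≤ x → ‖f x‖ ≤ C * x ^ n := by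
  obtain ⟨C, hC, hfC⟩ := hf.exists_pos
  obtain ⟨a, ha⟩ := eventually_atTop.1 hfC.bound
  refine ⟨C, max a 1, hC, by positivity, fun x hx => ?_⟩
  obtain ⟨hax, hx₁⟩ := max_le_iff.1 hx
  calc ‖f x‖ ≤ C * ‖x ^ m‖ := ha x hax
    _ = C * x ^ m := by rw [Real.norm_of_nonneg (by positivity)]
    _ ≤ C * x ^ n := by gcongr

theorem stmt_16_general {T 𝕜 : Type*} [NontriviallyNormedField 𝕜] {l : Filter T} {ω : T → 𝕜}
    (hω : Tendsto ω l (cobounded 𝕜)) {τ b α j : 𝕜} (hb : 2 * (b - τ) ≠ 0) (hj : j ^ 2 = -1)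
    {P : T → 𝕜 → 𝕜} (hP : ∀ᶠ t in l, ∀ s, P t s = (modalPoly τ b α (ω t)).eval s)
    {δ : T → 𝕜} (hδ : ∀ᶠ t in l, δ t = -P t (j * ω t) / deriv (P t) (j * ω t)) :
    (fun t => δ t + α ^ 2 / (2 * (b - τ) * ω t ^ 4) +
      j * (α ^ 2 * τ / (2 * (b - τ) * ω t ^ 3))) =O[l] fun t => ω t ^ (-7 : ℤ) := by
  set D : T → 𝕜 := fun t => 2 * (b - τ) * ω t ^ 4 with hD
  have hDtop : Tendsto D l (cobounded 𝕜) :=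
    (tendsto_mul_left_cobounded hb).comp ((tendsto_pow_cobounded_cobounded four_ne_zero).comp hω)
  have hexact : (fun t => δ t + α ^ 2 / D t + j * (α ^ 2 * τ / (2 * (b - τ) * ω t ^ 3))) =ᶠ[l]
      fun t => -(α ^ 2 * (1 + τ * j * ω t)) * ((D t + α ^ 2 * τ)⁻¹ - (D t)⁻¹) := by
    filter_upwards [hP, hδ, hω.eventually_ne_cobounded 0] with t hPt hδt hωt
    rw [hδt, funext hPt, Polynomial.deriv,
      neg_eval_div_eval_derivative_modalPoly_add_leading hj hωt]
  have hfactor : (fun t => -(α ^ 2 * (1 + τ * j * ω t))) =O[l] ω :=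
    ((isBigO_const_add_const_mul_of_tendsto_cobounded hω 1 (τ * j)).const_mul_left _).neg_left
  have hpow : (fun t => ω t * ((D t)⁻¹ * (D t)⁻¹)) =ᶠ[l]
      fun t => ((2 * (b - τ)) ^ 2)⁻¹ * ω t ^ (-7 : ℤ) := by
    filter_upwards [hω.eventually_ne_cobounded 0] with t hωt
    simp only [hD]
    field_simp
  calc _ =ᶠ[l] _ := hexact
    _ =O[l] fun t => ω t * ((D t)⁻¹ * (D t)⁻¹) :=
        hfactor.mul (isBigO_inv_add_const_sub_inv_of_tendsto_cobounded hDtop _)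
    _ =ᶠ[l] _ := hpow
    _ =O[l] fun t => ω t ^ (-7 : ℤ) := isBigO_const_mul_self _ _ _

/-- Expansion of the one-step Newton correction at the uncoupled wave root:
δ(ω) = −P_ω(σiω)/P_ω′(σiω) satisfies
δ(ω) = −α²/(2(b−τ)ω⁴) − σ i α²τ/(2(b−τ)ω³) + O(ω⁻⁵) as ω → ∞. -/
theorem stmt_16 (τ b α σ : ℝ) (hτ : 0 < τ) (hb : τ < b) (hα : α ≠ 0)
    (hσ : σ = 1 ∨ σ = -1) (P : ℝ → ℂ → ℂ)
    (hP : ∀ ω : ℝ, 0 < ω → ∀ s : ℂ, P ω s =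
      (s ^ 2 + (ω : ℂ) ^ 2) *
        ((τ : ℂ) * s ^ 3 + s ^ 2 + (b : ℂ) * (ω : ℂ) ^ 2 * s + (ω : ℂ) ^ 2) -
      (α : ℂ) ^ 2 * (1 + (τ : ℂ) * s))
    (δ : ℝ → ℂ)
    (hδ : ∀ ω : ℝ, 0 < ω → δ ω =
      -(P ω ((σ : ℂ) * Complex.I * (ω : ℂ))) /
        deriv (P ω) ((σ : ℂ) * Complex.I * (ω : ℂ))) :
    ∃ C Ω₀ : ℝ, 0 < C ∧ 0 < Ω₀ ∧ ∀ ω : ℝ, Ω₀ ≤ ω →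
      ‖δ ω + ((α ^ 2 / (2 * (b - τ) * ω ^ 4) : ℝ) : ℂ) +
          (σ : ℂ) * Complex.I * ((α ^ 2 * τ / (2 * (b - τ) * ω ^ 3) : ℝ) : ℂ)‖ ≤
        C * ω ^ (-5 : ℤ) := by
  have hlarge := eventually_gt_atTop (0 : ℝ)
  have hremainder := stmt_16_general (τ := τ) (b := b) (α := α) (j := σ * Complex.I)
    (RCLike.tendsto_ofReal_atTop_cobounded ℂ)
    (mul_ne_zero two_ne_zero (sub_ne_zero.2 (mod_cast hb.ne')))
    (by rcases hσ with rfl | rfl <;> simp)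
    (hlarge.mono fun ω hω s => by simp [modalPoly, hP ω hω]) (hlarge.mono hδ)
  exact exists_forall_norm_le_mul_zpow_of_isBigO (m := -7) (by norm_num)
    (Complex.isBigO_ofReal_right.1 (by simpa using hremainder))
end
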